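/- Fix integers d ≥ 4 and x such that 2x ≤ 3d + 1. Then T(3,d;x)' = ∅. -/

import Mathlib

open MvPolynomial

noncomputable section

/-- Projective `n`-space over `k`, as the projectivization of `k^(n+1)`. -/
abbrev ProjSpace (k : Type*) [Field k] (n : ℕ) := Projectivization k (Fin (n+1) → k)

variable (k : Type*) [Field k]

/-- Evaluation at a vector, as a linear map on polynomials. -/
def evalLM {n : ℕ} (v : Fin n → k) : MvPolynomial (Fin n) k →ₗ[k] k :=
  (MvPolynomial.aeval v).toLinearMap

/-- The submodule of polynomials vanishing together with all first partial derivatives at `v`. -/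
def doubleVanishing {n : ℕ} (v : Fin n → k) : Submodule k (MvPolynomial (Fin n) k) :=
  LinearMap.ker (evalLM k v) ⊓
    ⨅ i : Fin n, LinearMap.ker ((evalLM k v).comp (MvPolynomial.pderiv i).toLinearMap)

/-- `h^0(I_{2S}(d))`: dimension of degree-`d` forms vanishing doubly at all points of `S`. -/
def h0 (n d : ℕ) (S : Finset (ProjSpace k n)) : ℕ :=
  Module.finrank k
    ↥(homogeneousSubmodule (Fin (n+1)) k d ⊓ ⨅ p ∈ S, doubleVanishing k p.rep)

/-- `h^1(I_{2S}(d)) = h^0(I_{2S}(d)) + (n+1)#S - C(n+d,n)`. -/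
def h1 (n d : ℕ) (S : Finset (ProjSpace k n)) : ℤ :=
  (h0 k n d S : ℤ) + (n+1) * S.card - (n+d).choose n

/-- `S` spans `P^n`: it is contained in no hyperplane. -/
def Spans (n : ℕ) (S : Finset (ProjSpace k n)) : Prop :=
  Submodule.span k (Projectivization.rep '' (S : Set (ProjSpace k n))) = ⊤

/-- The Terracini locus `T(n,d;x)`. -/
def Terracini (n d x : ℕ) : Set (Finset (ProjSpace k n)) :=
  {S | S.card = x ∧ Spans k n S ∧ 0 < h0 k n d S ∧ 0 < h1 k n d S}

/-- The minimally Terracini locus `T(n,d;x)'`. -/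
def minTerracini (n d x : ℕ) : Set (Finset (ProjSpace k n)) :=
  {S | S ∈ Terracini k n d x ∧ ∀ A : Finset (ProjSpace k n), A ⊂ S → h1 k n d A = 0}

end

/-!
Suppose the double points of `S` fail to impose independent conditions on forms of degree `d`. The
failure is a nonzero functional `f ↦ ∑ p, (∂f/∂c_p)(p)` vanishing on all these forms, and minimality
of `S` makes every `c_p` nonzero. Euler's identity turns the terms with `c_p` proportional to `p`
into evaluations, so the functional is carried by a scheme `Z` with a point or a tangent vector at
each `p`; its degree is at most `2x ≤ 3d + 1`.

Multiplication by a linear form `h` turns a functional vanishing in degree `e + 1` into one that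
vanishes in degree `e` and is carried by the residual of `Z` with respect to the hyperplane `h = 0`.
By induction on `e` a nonzero functional vanishing in degree `e` is carried by a scheme of degree at
least `e + 2`, which lies on a line if its degree is at most `2e + 1`, and which has a subscheme of
degree at least `e + 2` in some hyperplane if its degree is at most `3e + 1`.

A line contains at most `(d + 1) / 2` points of `S`, because these form a proper subset of `S`.
Therefore, whenever a hyperplane contains a subscheme of `Z` of degree at least `d + 2`, the
residual scheme, nonempty as `S` spans, lies on a line on which `Z` has degree exactly `d + 1`, with
each point of `S` on it carrying a tangent vector along it. Three such hyperplanes give three lines,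
no two of which share a point of `S`, so `Z` would have degree at least `3 (d + 1) > 3d + 1`.
-/

open Module
open scoped LinearAlgebra.Projectivization

/-! ### Differentials of polynomials -/

section Differential

variable {R σ : Type*} [CommSemiring R] [Fintype σ]

/-- The differential `v ↦ ∑ i, v i * (∂f/∂Xᵢ)(x)` of a polynomial `f` at `x`, linear in `f`. -/
noncomputable def differentialAt (x : σ → R) : MvPolynomial σ R →ₗ[R] Dual R (σ → R) :=
  ∑ i, ((aeval x).toLinearMap ∘ₗ (pderiv i).toLinearMap).smulRight (LinearMap.proj i)

/-- A linear form on `σ → R`, as a polynomial of degree one. -/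
noncomputable def linearFormPoly (h : Dual R (σ → R)) : MvPolynomial σ R :=
  ∑ i, C (h (Pi.basisFun R σ i)) * X i

lemma differentialAt_apply (x : σ → R) (f : MvPolynomial σ R) (v : σ → R) :
    differentialAt x f v = ∑ i, eval x (pderiv i f) * v i := by
  simp [differentialAt, LinearMap.sum_apply, aeval_eq_eval]

lemma differentialAt_basisFun (x : σ → R) (f : MvPolynomial σ R) (i : σ) :
    differentialAt x f (Pi.basisFun R σ i) = eval x (pderiv i f) := by
  classical
  simp [differentialAt_apply, Pi.single_apply]

lemma differentialAt_C (x : σ → R) (c : R) : differentialAt x (C c) = 0 := by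
  ext; simp [differentialAt_apply]

lemma differentialAt_X (x : σ → R) (i : σ) :
    differentialAt x (X i) = LinearMap.proj i := by
  classical
  ext v
  simp [differentialAt_apply, pderiv_X, Pi.single_apply]

lemma differentialAt_mul (x : σ → R) (f g : MvPolynomial σ R) :
    differentialAt x (f * g) =
      eval x f • differentialAt x g + eval x g • differentialAt x f := by
  ext v
  simp [differentialAt_apply, Derivation.leibniz, add_mul, mul_assoc, Finset.sum_add_distrib,
    Finset.mul_sum]

lemma differentialAt_self {f : MvPolynomial σ R} {d : ℕ} (hf : f.IsHomogeneous d) (x : σ → R) :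
    differentialAt x f x = d * eval x f := by
  simpa [differentialAt_apply, mul_comm] using congrArg (eval x) hf.sum_X_mul_pderiv

lemma isHomogeneous_linearFormPoly (h : Dual R (σ → R)) : (linearFormPoly h).IsHomogeneous 1 :=
  IsHomogeneous.sum _ _ _ fun _ _ => isHomogeneous_C_mul_X _ _

lemma eval_linearFormPoly (h : Dual R (σ → R)) (x : σ → R) : eval x (linearFormPoly h) = h x := by
  conv_rhs => rw [← (Pi.basisFun R σ).sum_repr x]
  simp only [linearFormPoly, map_sum, map_mul, eval_C, eval_X, map_smul, smul_eq_mul,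
    Pi.basisFun_repr, mul_comm]

lemma differentialAt_linearFormPoly (h : Dual R (σ → R)) (x : σ → R) :
    differentialAt x (linearFormPoly h) = h := by
  ext v
  rw [← eval_linearFormPoly h v]
  simp [linearFormPoly, differentialAt_mul, differentialAt_C, differentialAt_X,
    LinearMap.sum_apply]

end Differential

section LinearPullback

variable {R σ τ : Type*} [CommSemiring R] [Fintype τ]

/-- Substitution of the coordinates of a linear map `u` into a polynomial, that is, `f ∘ u`. -/
noncomputable def linearPullback (u : (τ → R) →ₗ[R] (σ → R)) :
    MvPolynomial σ R →ₐ[R] MvPolynomial τ R :=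
  bind₁ fun i => linearFormPoly (LinearMap.proj i ∘ₗ u)

lemma eval_linearPullback (u : (τ → R) →ₗ[R] (σ → R)) (f : MvPolynomial σ R) (y : τ → R) :
    eval y (linearPullback u f) = eval (u y) f := by
  induction f using MvPolynomial.induction_on with
  | C c => simp [linearPullback]
  | add f g hf hg => simp only [map_add, hf, hg]
  | mul_X f i hf => rw [map_mul, map_mul, hf]; simp [linearPullback, eval_linearFormPoly]

lemma differentialAt_linearPullback [Fintype σ] (u : (τ → R) →ₗ[R] (σ → R))
    (f : MvPolynomial σ R) (y : τ → R) :
    differentialAt y (linearPullback u f) = differentialAt (u y) f ∘ₗ u := by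
  induction f using MvPolynomial.induction_on with
  | C c => simp [linearPullback, differentialAt_C]
  | add f g hf hg => simp only [map_add, hf, hg, LinearMap.add_comp]
  | mul_X f i hf =>
    have pullback_X : linearPullback u (X i) = linearFormPoly (LinearMap.proj i ∘ₗ u) :=
      bind₁_X_right _ _
    rw [map_mul, differentialAt_mul, differentialAt_mul, hf, eval_linearPullback, pullback_X,
      eval_linearFormPoly, differentialAt_linearFormPoly, differentialAt_X, eval_X]
    simp only [LinearMap.add_comp, LinearMap.smul_comp, LinearMap.comp_apply, LinearMap.proj_apply]

lemma isHomogeneous_linearPullback (u : (τ → R) →ₗ[R] (σ → R)) {f : MvPolynomial σ R} {d : ℕ}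
    (hf : f.IsHomogeneous d) : (linearPullback u f).IsHomogeneous d := by
  have substituted := hf.aeval (S := R)
    (fun i => linearFormPoly (LinearMap.proj i ∘ₗ u)) (n := 1)
    fun i => isHomogeneous_linearFormPoly _
  rwa [one_mul] at substituted

end LinearPullback

/-! ### Linear algebra -/

section LinearAlgebra

variable {k V : Type*} [Field k] [AddCommGroup V] [Module k V]

lemma finrank_sup_span_singleton_le [FiniteDimensional k V] (U : Submodule k V) (x : V) :
    finrank k (U ⊔ k ∙ x : Submodule k V) ≤ finrank k U + 1 :=
  (Submodule.finrank_add_le_finrank_add_finrank U _).trans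
    (Nat.add_le_add_left ((finrank_span_le_card {x}).trans_eq (by simp)) _)

lemma exists_ge_finrank_eq [FiniteDimensional k V] (U : Submodule k V) {r : ℕ}
    (hUr : finrank k U ≤ r) (hrV : r ≤ finrank k V) :
    ∃ U' : Submodule k V, U ≤ U' ∧ finrank k U' = r := by
  induction r, hUr using Nat.le_induction with
  | base => exact ⟨U, le_rfl, rfl⟩
  | succ r _ ih =>
    obtain ⟨U', hUU', hU'⟩ := ih (by omega)
    obtain ⟨x, hx⟩ : ∃ x, x ∉ U' := by
      by_contra! hall
      rw [(Submodule.eq_top_iff' (p := U')).2 hall, finrank_top] at hU'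
      omega
    exact ⟨U' ⊔ k ∙ x, hUU'.trans le_sup_left, by rw [Submodule.finrank_sup_span_singleton hx, hU']⟩

lemma exists_ne_zero_le_ker [FiniteDimensional k V] {U : Submodule k V}
    (hU : finrank k U < finrank k V) : ∃ h : Dual k V, h ≠ 0 ∧ U ≤ LinearMap.ker h :=
  U.exists_le_ker_of_lt_top (lt_top_iff_ne_top.2 fun h => hU.ne (by rw [h, finrank_top]))

lemma le_of_finrank_le_two {L M : Submodule k V} [FiniteDimensional k V] (hL : finrank k L ≤ 2)
    {x y : V} (hx : x ≠ 0) (hyx : y ∉ k ∙ x) (hxL : x ∈ L) (hyL : y ∈ L) (hxM : x ∈ M)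
    (hyM : y ∈ M) : L ≤ M := by
  have hle : k ∙ x ⊔ k ∙ y ≤ L := by simp [hxL, hyL]
  have hrank : finrank k (k ∙ x ⊔ k ∙ y : Submodule k V) = 2 := by
    rw [Submodule.finrank_sup_span_singleton hyx, finrank_span_singleton hx]
  rw [← Submodule.eq_of_le_of_finrank_le hle (hL.trans hrank.ge)]
  simp [hxM, hyM]

lemma projectivization_eq_of_rep_mem_submodule {p q : ℙ k V} (h : q.rep ∈ p.submodule) :
    q = p := by
  rw [p.submodule_eq, Submodule.mem_span_singleton] at h
  rw [← q.mk_rep, ← p.mk_rep, Projectivization.mk_eq_mk_iff']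
  exact h

end LinearAlgebra

/-! ### First-order functionals and their residuals -/

/-- A linear functional `f ↦ ∑ p, a_p f(p) + (∂f/∂v_p)(p)` on polynomials, summed over finitely many
points `p` of projective space. The functional is carried by the zero-dimensional scheme
with, at each `p` of `support`, the tangent vector `(p, v_p)` if `v_p ≠ 0`, the reduced point `p` if
`v_p = 0 ≠ a_p`, and nothing otherwise; the notions below describe that scheme. Points are evaluated
at their representatives `p.rep`. -/
structure FirstOrderFunctional (k σ : Type*) [Field k] where
  support : Finset (ℙ k (σ → k))
  coeff : ℙ k (σ → k) → k
  tangent : ℙ k (σ → k) → σ → k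
  tangent_notMem : ∀ p, tangent p ≠ 0 → tangent p ∉ p.submodule

namespace FirstOrderFunctional

variable {k σ : Type*} [Field k]

/-- The functional `f ↦ φ (h f)`. Its scheme is the residual scheme of that of `φ`
with respect to the hyperplane `h = 0`. -/
noncomputable def residual (φ : FirstOrderFunctional k σ) (h : Dual k (σ → k)) :
    FirstOrderFunctional k σ where
  support := φ.support
  coeff p := φ.coeff p * h p.rep + h (φ.tangent p)
  tangent p := h p.rep • φ.tangent p
  tangent_notMem p hne := by
    obtain ⟨hp, hv⟩ := smul_ne_zero_iff.1 hne
    rw [Submodule.smul_mem_iff _ hp]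
    exact φ.tangent_notMem p hv

open Classical in
/-- The length at `p` of the intersection of the scheme of `φ` with the linear subspace `ℙ(U)`. -/
noncomputable def localDegreeIn (φ : FirstOrderFunctional k σ) (U : Submodule k (σ → k))
    (p : ℙ k (σ → k)) : ℕ :=
  if p.rep ∉ U then 0
  else if φ.tangent p = 0 then if φ.coeff p = 0 then 0 else 1
  else if φ.tangent p ∈ U then 2 else 1

/-- The degree of the intersection of the scheme of `φ` with the linear subspace `ℙ(U)`. -/
noncomputable def degreeIn (φ : FirstOrderFunctional k σ) (U : Submodule k (σ → k)) : ℕ :=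
  ∑ p ∈ φ.support, φ.localDegreeIn U p

/-- The degree of the scheme of `φ`. -/
noncomputable abbrev degree (φ : FirstOrderFunctional k σ) : ℕ := φ.degreeIn ⊤

section Degree

variable (φ : FirstOrderFunctional k σ) {U U' : Submodule k (σ → k)} {p : ℙ k (σ → k)}

lemma localDegreeIn_mono (hU : U ≤ U') : φ.localDegreeIn U p ≤ φ.localDegreeIn U' p := by
  have hp := @hU p.rep
  have hv := @hU (φ.tangent p)
  unfold localDegreeIn
  split_ifs <;> simp_all

lemma degreeIn_mono (hU : U ≤ U') : φ.degreeIn U ≤ φ.degreeIn U' :=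
  Finset.sum_le_sum fun _ _ => φ.localDegreeIn_mono hU

lemma degreeIn_le_degree (U : Submodule k (σ → k)) : φ.degreeIn U ≤ φ.degree :=
  φ.degreeIn_mono le_top

lemma localDegreeIn_le_two : φ.localDegreeIn U p ≤ 2 := by
  unfold localDegreeIn
  split_ifs <;> simp

lemma localDegreeIn_top_pos_iff :
    0 < φ.localDegreeIn ⊤ p ↔ φ.tangent p ≠ 0 ∨ φ.coeff p ≠ 0 := by
  unfold localDegreeIn
  split_ifs <;> simp_all

lemma localDegreeIn_pos_iff :
    0 < φ.localDegreeIn U p ↔ p.rep ∈ U ∧ 0 < φ.localDegreeIn ⊤ p := by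
  unfold localDegreeIn
  split_ifs <;> simp_all

lemma localDegreeIn_lt_top_iff :
    φ.localDegreeIn U p < φ.localDegreeIn ⊤ p ↔
      0 < φ.localDegreeIn ⊤ p ∧ (p.rep ∉ U ∨ φ.tangent p ∉ U) := by
  unfold localDegreeIn
  split_ifs <;> simp_all

lemma localDegreeIn_eq_two_iff :
    φ.localDegreeIn U p = 2 ↔ p.rep ∈ U ∧ φ.tangent p ≠ 0 ∧ φ.tangent p ∈ U := by
  unfold localDegreeIn
  split_ifs <;> simp_all

lemma localDegreeIn_residual_le (h : Dual k (σ → k)) :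
    (φ.residual h).localDegreeIn U p ≤ φ.localDegreeIn U p := by
  by_cases hp : h p.rep = 0 <;> by_cases hpU : p.rep ∈ U <;> by_cases hv : φ.tangent p = 0 <;>
    by_cases hhv : h (φ.tangent p) = 0 <;> by_cases hvU : φ.tangent p ∈ U <;>
    by_cases ha : φ.coeff p = 0 <;> simp_all [localDegreeIn, residual, Submodule.smul_mem_iff]

lemma degreeIn_residual_le (h : Dual k (σ → k)) (U : Submodule k (σ → k)) :
    (φ.residual h).degreeIn U ≤ φ.degreeIn U :=
  Finset.sum_le_sum fun _ _ => φ.localDegreeIn_residual_le h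

lemma localDegreeIn_residual_add_localDegreeIn_ker (h : Dual k (σ → k)) (p : ℙ k (σ → k)) :
    (φ.residual h).localDegreeIn ⊤ p + φ.localDegreeIn (LinearMap.ker h) p =
      φ.localDegreeIn ⊤ p := by
  by_cases hp : h p.rep = 0 <;> by_cases hv : φ.tangent p = 0 <;>
    by_cases hhv : h (φ.tangent p) = 0 <;> by_cases ha : φ.coeff p = 0 <;>
    simp_all [localDegreeIn, residual]

lemma degree_residual_add_degreeIn_ker (h : Dual k (σ → k)) :
    (φ.residual h).degree + φ.degreeIn (LinearMap.ker h) = φ.degree :=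
  Finset.sum_add_distrib.symm.trans <|
    Finset.sum_congr rfl fun p _ => φ.localDegreeIn_residual_add_localDegreeIn_ker h p

lemma exists_notMem_of_degreeIn_lt (hlt : φ.degreeIn U < φ.degree) :
    ∃ p ∈ φ.support, 0 < φ.localDegreeIn ⊤ p ∧ (p.rep ∉ U ∨ φ.tangent p ∉ U) := by
  obtain ⟨p, hp, hlt⟩ := Finset.exists_lt_of_sum_lt hlt
  exact ⟨p, hp, φ.localDegreeIn_lt_top_iff.1 hlt⟩

lemma degreeIn_lt_of_localDegreeIn_lt (hU : U ≤ U') (hp : p ∈ φ.support)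
    (hlt : φ.localDegreeIn U p < φ.localDegreeIn U' p) : φ.degreeIn U < φ.degreeIn U' :=
  Finset.sum_lt_sum (fun _ _ => φ.localDegreeIn_mono hU) ⟨p, hp, hlt⟩

lemma exists_degreeIn_lt_sup_span_singleton (hlt : φ.degreeIn U < φ.degree) :
    ∃ x, φ.degreeIn U < φ.degreeIn (U ⊔ k ∙ x) := by
  obtain ⟨p, hp, hpos, hout⟩ := φ.exists_notMem_of_degreeIn_lt hlt
  have mem_sup (x : σ → k) : x ∈ U ⊔ k ∙ x :=
    Submodule.mem_sup_right (Submodule.mem_span_singleton_self x)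
  by_cases hpU : p.rep ∈ U
  · have hvU := hout.resolve_left (not_not_intro hpU)
    refine ⟨φ.tangent p, φ.degreeIn_lt_of_localDegreeIn_lt le_sup_left hp ?_⟩
    have hlt_two : φ.localDegreeIn U p ≠ 2 := fun h => hvU (φ.localDegreeIn_eq_two_iff.1 h).2.2
    rw [φ.localDegreeIn_eq_two_iff.2 ⟨Submodule.mem_sup_left hpU,
      fun hv => hvU (hv ▸ U.zero_mem), mem_sup _⟩]
    exact lt_of_le_of_ne φ.localDegreeIn_le_two hlt_two
  · refine ⟨p.rep, φ.degreeIn_lt_of_localDegreeIn_lt le_sup_left hp ?_⟩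
    have hzero : ¬ 0 < φ.localDegreeIn U p := fun h => hpU (φ.localDegreeIn_pos_iff.1 h).1
    exact (not_lt.1 hzero).trans_lt (φ.localDegreeIn_pos_iff.2 ⟨mem_sup _, hpos⟩)

lemma exists_le_ker_degree_residual_pos (hlt : φ.degreeIn U < φ.degree) :
    ∃ h : Dual k (σ → k), U ≤ LinearMap.ker h ∧ 0 < (φ.residual h).degree ∧
      (φ.residual h).degree + φ.degreeIn U ≤ φ.degree := by
  obtain ⟨p, hp, hpos, hout⟩ := φ.exists_notMem_of_degreeIn_lt hlt
  obtain ⟨h, hUh, hout'⟩ : ∃ h : Dual k (σ → k), U ≤ LinearMap.ker h ∧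
      (p.rep ∉ LinearMap.ker h ∨ φ.tangent p ∉ LinearMap.ker h) := by
    rcases hout with hx | hx <;> obtain ⟨h, hhx, hUh⟩ := Submodule.exists_le_ker_of_notMem hx
    exacts [⟨h, hUh, .inl hhx⟩, ⟨h, hUh, .inr hhx⟩]
  have hker : φ.degreeIn (LinearMap.ker h) < φ.degree :=
    φ.degreeIn_lt_of_localDegreeIn_lt le_top hp (φ.localDegreeIn_lt_top_iff.2 ⟨hpos, hout'⟩)
  have hsum := φ.degree_residual_add_degreeIn_ker h
  have hmono := φ.degreeIn_mono hUh
  exact ⟨h, hUh, by omega, by omega⟩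

lemma degreeIn_bot : φ.degreeIn ⊥ = 0 :=
  Finset.sum_eq_zero fun p _ => by simp [localDegreeIn, p.rep_nonzero]

lemma degreeIn_submodule_le_one (p : ℙ k (σ → k)) : φ.degreeIn p.submodule ≤ 1 := by
  have hne (q : ℙ k (σ → k)) (hq : q ≠ p) : φ.localDegreeIn p.submodule q = 0 :=
    Nat.eq_zero_of_not_pos fun hpos =>
      hq (projectivization_eq_of_rep_mem_submodule (φ.localDegreeIn_pos_iff.1 hpos).1)
  have hp : φ.localDegreeIn p.submodule p ≠ 2 := fun htwo =>
    have ⟨_, hv, hmem⟩ := φ.localDegreeIn_eq_two_iff.1 htwo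
    φ.tangent_notMem p hv hmem
  have hle : φ.localDegreeIn p.submodule p ≤ 2 := φ.localDegreeIn_le_two
  by_cases hps : p ∈ φ.support
  · rw [degreeIn, Finset.sum_eq_single_of_mem p hps fun q _ => hne q]
    omega
  · rw [degreeIn, Finset.sum_eq_zero fun q hq => hne q (ne_of_mem_of_not_mem hq hps)]
    exact zero_le_one

lemma exists_degreeIn_submodule_eq_one (hpos : 0 < φ.degree) :
    ∃ p : ℙ k (σ → k), φ.degreeIn p.submodule = 1 := by
  obtain ⟨p, hp, hlocal⟩ := Finset.exists_ne_zero_of_sum_ne_zero hpos.ne'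
  refine ⟨p, (φ.degreeIn_submodule_le_one p).antisymm <| Nat.succ_le_of_lt <|
    Finset.sum_pos_iff.2 ⟨p, hp, ?_⟩⟩
  refine φ.localDegreeIn_pos_iff.2 ⟨?_, Nat.pos_of_ne_zero hlocal⟩
  rw [p.submodule_eq]
  exact Submodule.mem_span_singleton_self _

lemma exists_finrank_le_degreeIn_ge [Finite σ] {r : ℕ} (hr : r ≤ φ.degree) :
    ∃ U : Submodule k (σ → k), finrank k U ≤ r ∧ r ≤ φ.degreeIn U := by
  induction r with
  | zero => exact ⟨⊥, by simp, Nat.zero_le _⟩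
  | succ r ih =>
    obtain ⟨U, hrank, hdeg⟩ := ih (by omega)
    by_cases hU : r + 1 ≤ φ.degreeIn U
    · exact ⟨U, by omega, hU⟩
    · obtain ⟨x, hx⟩ := φ.exists_degreeIn_lt_sup_span_singleton (U := U) (by omega)
      exact ⟨_, (finrank_sup_span_singleton_le U x).trans (by omega), by omega⟩

lemma exists_ne_zero_le_ker_min_le_degreeIn [Fintype σ]
    (hU : finrank k U + 1 < Fintype.card σ) :
    ∃ h : Dual k (σ → k), h ≠ 0 ∧ U ≤ LinearMap.ker h ∧
      min (φ.degreeIn U + 1) φ.degree ≤ φ.degreeIn (LinearMap.ker h) := by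
  obtain ⟨x, hx⟩ : ∃ x, min (φ.degreeIn U + 1) φ.degree ≤ φ.degreeIn (U ⊔ k ∙ x) := by
    by_cases hlt : φ.degreeIn U < φ.degree
    · obtain ⟨x, hx⟩ := φ.exists_degreeIn_lt_sup_span_singleton hlt
      exact ⟨x, (min_le_left _ _).trans hx⟩
    · exact ⟨0, (min_le_right _ _).trans ((not_lt.1 hlt).trans (φ.degreeIn_mono le_sup_left))⟩
  obtain ⟨h, hne, hker⟩ := exists_ne_zero_le_ker (U := U ⊔ k ∙ x) <| by
    rw [finrank_fintype_fun_eq_card]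
    exact (finrank_sup_span_singleton_le U x).trans_lt hU
  exact ⟨h, hne, le_sup_left.trans hker, hx.trans (φ.degreeIn_mono hker)⟩

end Degree

section Annihilates

variable [Fintype σ] {φ : FirstOrderFunctional k σ} {e : ℕ}

/-- The value of the functional on a polynomial. -/
noncomputable def apply (φ : FirstOrderFunctional k σ) (f : MvPolynomial σ k) : k :=
  ∑ p ∈ φ.support, (φ.coeff p * eval p.rep f + differentialAt p.rep f (φ.tangent p))

/-- The functional vanishes on all forms of degree `e`. -/
def Annihilates (φ : FirstOrderFunctional k σ) (e : ℕ) : Prop :=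
  ∀ f : MvPolynomial σ k, f.IsHomogeneous e → φ.apply f = 0

lemma residual_apply (φ : FirstOrderFunctional k σ) (h : Dual k (σ → k)) (f : MvPolynomial σ k) :
    (φ.residual h).apply f = φ.apply (linearFormPoly h * f) :=
  Finset.sum_congr rfl fun p _ => by
    simp only [residual, differentialAt_mul, eval_linearFormPoly, differentialAt_linearFormPoly,
      map_smul, map_mul, LinearMap.add_apply, LinearMap.smul_apply, smul_eq_mul]
    ring

lemma Annihilates.residual (hφ : φ.Annihilates (e + 1)) (h : Dual k (σ → k)) :
    (φ.residual h).Annihilates e := fun f hf => by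
  rw [residual_apply]
  exact hφ _ (add_comm 1 e ▸ (isHomogeneous_linearFormPoly h).mul hf)

lemma Annihilates.degree_ne_one (hφ : φ.Annihilates 0) : φ.degree ≠ 1 := fun hone => by
  classical
  obtain ⟨p, hp, hlocal_ne⟩ := Finset.exists_ne_zero_of_sum_ne_zero (hone.trans_ne one_ne_zero)
  have hsplit : _ = φ.degree := Finset.add_sum_erase φ.support (φ.localDegreeIn ⊤) hp
  have hlocal : φ.localDegreeIn ⊤ p = 1 := by omega
  have hothers (q) (hq : q ∈ φ.support) (hqp : q ≠ p) : φ.localDegreeIn ⊤ q = 0 :=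
    Finset.sum_eq_zero_iff.1 (by omega) q (Finset.mem_erase.2 ⟨hqp, hq⟩)
  have hv : φ.tangent p = 0 := by
    by_contra hv
    simp [φ.localDegreeIn_eq_two_iff.2 ⟨Submodule.mem_top, hv, Submodule.mem_top⟩] at hlocal
  have hcoeff_others (q) (hq : q ∈ φ.support) (hqp : q ≠ p) : φ.coeff q = 0 := by
    have hnot := mt φ.localDegreeIn_top_pos_iff.2 (hothers q hq hqp).not_gt
    tauto
  have hsum : φ.coeff p = 0 := by
    rw [← Finset.sum_eq_single_of_mem p hp hcoeff_others]
    simpa only [apply, differentialAt_C, eval_C, mul_one, LinearMap.zero_apply, add_zero]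
      using hφ (C 1) (isHomogeneous_C σ 1)
  have hpos := φ.localDegreeIn_top_pos_iff.1 (hlocal ▸ one_pos)
  tauto

theorem Annihilates.add_two_le_degree (hφ : φ.Annihilates e) (hpos : 0 < φ.degree) :
    e + 2 ≤ φ.degree := by
  induction e generalizing φ with
  | zero => have := hφ.degree_ne_one; omega
  | succ e ih =>
    by_contra! hlt
    obtain ⟨U, hUlt, hUge⟩ :
        ∃ U, φ.degreeIn U < φ.degree ∧ φ.degree ≤ φ.degreeIn U + (e + 1) := by
      by_cases hone : φ.degree = 1
      · exact ⟨⊥, by rw [φ.degreeIn_bot]; omega, by rw [φ.degreeIn_bot]; omega⟩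
      · obtain ⟨p, hp⟩ := φ.exists_degreeIn_submodule_eq_one hpos
        exact ⟨p.submodule, by omega, by omega⟩
    obtain ⟨h, -, hres, hle⟩ := φ.exists_le_ker_degree_residual_pos hUlt
    have := ih (hφ.residual h) hres
    omega

theorem Annihilates.exists_finrank_le_two_degreeIn_eq_degree (hφ : φ.Annihilates e)
    (hdeg : φ.degree ≤ 2 * e + 1) :
    ∃ L : Submodule k (σ → k), finrank k L ≤ 2 ∧ φ.degreeIn L = φ.degree := by
  rcases Nat.eq_zero_or_pos φ.degree with hzero | hpos
  · exact ⟨⊥, by simp, by rw [φ.degreeIn_bot, hzero]⟩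
  have hmin := hφ.add_two_le_degree hpos
  induction e generalizing φ with
  | zero => omega
  | succ e ih =>
    obtain ⟨U, hUrank, hUdeg⟩ := φ.exists_finrank_le_degreeIn_ge (r := 2) (by omega)
    by_cases hU : φ.degreeIn U = φ.degree
    · exact ⟨U, hUrank, hU⟩
    obtain ⟨h, -, hpos_h, hle_h⟩ :=
      φ.exists_le_ker_degree_residual_pos (lt_of_le_of_ne (φ.degreeIn_le_degree U) hU)
    have hmin_h := (hφ.residual h).add_two_le_degree hpos_h
    obtain ⟨L, hLrank, hLdeg⟩ := ih (hφ.residual h) (by omega) hpos_h hmin_h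
    have hL_le := φ.degreeIn_residual_le h L
    by_cases hL : φ.degreeIn L = φ.degree
    · exact ⟨L, hLrank, hL⟩
    obtain ⟨g, -, hpos_g, hle_g⟩ :=
      φ.exists_le_ker_degree_residual_pos (lt_of_le_of_ne (φ.degreeIn_le_degree L) hL)
    have hmin_g := (hφ.residual g).add_two_le_degree hpos_g
    omega

theorem Annihilates.exists_ne_zero_add_two_le_degreeIn_ker (hσ : 4 ≤ Fintype.card σ)
    (hφ : φ.Annihilates e) (hpos : 0 < φ.degree) (hdeg : φ.degree ≤ 3 * e + 1) :
    ∃ h : Dual k (σ → k), h ≠ 0 ∧ e + 2 ≤ φ.degreeIn (LinearMap.ker h) := by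
  induction e generalizing φ with
  | zero => have := hφ.add_two_le_degree hpos; omega
  | succ e ih =>
    by_contra! hsmall
    have hmin := hφ.add_two_le_degree hpos
    have hres_pos (h : Dual k (σ → k)) (hne : h ≠ 0) : 0 < (φ.residual h).degree := by
      have := φ.degree_residual_add_degreeIn_ker h
      have := hsmall h hne
      omega
    obtain ⟨U, hUrank, hUdeg⟩ := φ.exists_finrank_le_degreeIn_ge (r := 3) (by omega)
    obtain ⟨f, hf, hUf⟩ := exists_ne_zero_le_ker (U := U) <| by
      rw [finrank_fintype_fun_eq_card]; omega
    have hUf_deg := φ.degreeIn_mono hUf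
    have hf_small := hsmall f hf
    have hf_sum := φ.degree_residual_add_degreeIn_ker f
    obtain ⟨g, hg, hg_deg⟩ := ih (hφ.residual f) (hres_pos f hf) (by omega)
    have hg_le := φ.degreeIn_residual_le f (LinearMap.ker g)
    have hg_sum := φ.degree_residual_add_degreeIn_ker g
    have hg_min := (hφ.residual g).add_two_le_degree (hres_pos g hg)
    have hg_line : (φ.residual g).degree ≤ 2 * e + 1 := by
      obtain ⟨h, hh, hh_deg⟩ := ih (hφ.residual g) (hres_pos g hg) (by omega)
      have hh_le := φ.degreeIn_residual_le g (LinearMap.ker h)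
      have hh_small := hsmall h hh
      have hh_sum := (φ.residual g).degree_residual_add_degreeIn_ker h
      obtain ⟨e, rfl⟩ : ∃ e', e = e' + 1 := Nat.exists_eq_add_one.2 (by omega)
      have hh_min := ((hφ.residual g).residual h).add_two_le_degree
      omega
    obtain ⟨L, hLrank, hLdeg⟩ :=
      (hφ.residual g).exists_finrank_le_two_degreeIn_eq_degree hg_line
    have hL_le := φ.degreeIn_residual_le g L
    obtain ⟨h, hh, -, hh_deg⟩ := φ.exists_ne_zero_le_ker_min_le_degreeIn (U := L) (by omega)
    have hh_small := hsmall h hh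
    omega

end Annihilates

section PointsIn

variable {φ : FirstOrderFunctional k σ} {U : Submodule k (σ → k)} {p : ℙ k (σ → k)} {e : ℕ}

open Classical in
/-- The points of `φ.support` on the linear subspace `ℙ(U)`. -/
noncomputable def pointsIn (φ : FirstOrderFunctional k σ) (U : Submodule k (σ → k)) :
    Finset (ℙ k (σ → k)) :=
  φ.support.filter fun p => p.rep ∈ U

lemma mem_pointsIn : p ∈ φ.pointsIn U ↔ p ∈ φ.support ∧ p.rep ∈ U := by
  simp [pointsIn]

lemma sum_pointsIn_localDegreeIn (φ : FirstOrderFunctional k σ) (U : Submodule k (σ → k)) :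
    ∑ p ∈ φ.pointsIn U, φ.localDegreeIn U p = φ.degreeIn U := by
  classical
  exact Finset.sum_filter_of_ne fun _ _ hne =>
    (φ.localDegreeIn_pos_iff.1 (Nat.pos_of_ne_zero hne)).1

lemma degreeIn_le_two_mul_card_pointsIn (φ : FirstOrderFunctional k σ)
    (U : Submodule k (σ → k)) : φ.degreeIn U ≤ 2 * (φ.pointsIn U).card := by
  rw [← sum_pointsIn_localDegreeIn, mul_comm]
  exact Finset.sum_le_card_nsmul _ _ _ fun _ _ => φ.localDegreeIn_le_two

lemma localDegreeIn_eq_two_of_degreeIn_eq (hU : φ.degreeIn U = 2 * (φ.pointsIn U).card)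
    (hp : p ∈ φ.pointsIn U) : φ.localDegreeIn U p = 2 := by
  rw [← sum_pointsIn_localDegreeIn, mul_comm, ← smul_eq_mul, ← Finset.sum_const] at hU
  exact (Finset.sum_eq_sum_iff_of_le fun _ _ => φ.localDegreeIn_le_two).1 hU p hp

lemma degreeIn_le_sum_pointsIn (φ : FirstOrderFunctional k σ) (U : Submodule k (σ → k)) :
    φ.degreeIn U ≤ ∑ p ∈ φ.pointsIn U, φ.localDegreeIn ⊤ p := by
  rw [← sum_pointsIn_localDegreeIn]
  exact Finset.sum_le_sum fun _ _ => φ.localDegreeIn_mono le_top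

lemma degreeIn_add_add_le_degree {L M N : Submodule k (σ → k)}
    (hLM : Disjoint (φ.pointsIn L) (φ.pointsIn M)) (hLN : Disjoint (φ.pointsIn L) (φ.pointsIn N))
    (hMN : Disjoint (φ.pointsIn M) (φ.pointsIn N)) :
    φ.degreeIn L + φ.degreeIn M + φ.degreeIn N ≤ φ.degree := by
  classical
  calc φ.degreeIn L + φ.degreeIn M + φ.degreeIn N
      ≤ ∑ p ∈ φ.pointsIn L ∪ φ.pointsIn M ∪ φ.pointsIn N, φ.localDegreeIn ⊤ p := by
        rw [Finset.sum_union (Finset.disjoint_union_left.2 ⟨hLN, hMN⟩), Finset.sum_union hLM]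
        gcongr <;> exact φ.degreeIn_le_sum_pointsIn _
    _ ≤ φ.degree := Finset.sum_le_sum_of_subset fun p hp => by
        simp only [Finset.mem_union, mem_pointsIn] at hp
        tauto

lemma le_of_localDegreeIn_eq_two [Finite σ] {L M : Submodule k (σ → k)} (hL : finrank k L ≤ 2)
    (hpL : φ.localDegreeIn L p = 2) (hpM : φ.localDegreeIn M p = 2) : L ≤ M := by
  obtain ⟨hxL, hv, hvL⟩ := φ.localDegreeIn_eq_two_iff.1 hpL
  obtain ⟨hxM, -, hvM⟩ := φ.localDegreeIn_eq_two_iff.1 hpM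
  refine le_of_finrank_le_two hL p.rep_nonzero ?_ hxL hvL hxM hvM
  rw [← p.submodule_eq]
  exact φ.tangent_notMem p hv

variable [Fintype σ]

lemma Annihilates.exists_line_of_degree_residual_le (hφ : φ.Annihilates (e + 1))
    (hline : ∀ L : Submodule k (σ → k), finrank k L ≤ 2 → 2 * (φ.pointsIn L).card ≤ e + 2)
    {h : Dual k (σ → k)} (hpos : 0 < (φ.residual h).degree)
    (hdeg : (φ.residual h).degree ≤ 2 * e + 1) :
    ∃ L : Submodule k (σ → k), finrank k L ≤ 2 ∧ φ.degreeIn L = e + 2 ∧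
      ∀ p ∈ φ.pointsIn L, φ.localDegreeIn L p = 2 ∧ p.rep ∉ LinearMap.ker h := by
  obtain ⟨L, hrank, hL⟩ := (hφ.residual h).exists_finrank_le_two_degreeIn_eq_degree hdeg
  have hmin := (hφ.residual h).add_two_le_degree hpos
  have hres_le := φ.degreeIn_residual_le h L
  have hle_card := φ.degreeIn_le_two_mul_card_pointsIn L
  have hcard_le := hline L hrank
  refine ⟨L, hrank, by omega, fun p hp => ⟨?_, ?_⟩⟩
  · exact localDegreeIn_eq_two_of_degreeIn_eq (by omega) hp
  · have hres_eq : (φ.residual h).degreeIn L = 2 * ((φ.residual h).pointsIn L).card := by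
      change _ = 2 * (φ.pointsIn L).card
      omega
    obtain ⟨-, hne, -⟩ := (φ.residual h).localDegreeIn_eq_two_iff.1
      (localDegreeIn_eq_two_of_degreeIn_eq hres_eq hp)
    exact (smul_ne_zero_iff.1 hne).1

lemma exists_ne_zero_le_ker_rep_mem_ker (hσ : 4 ≤ Fintype.card σ) (hU : finrank k U ≤ 2)
    (hp : p ∈ φ.support) (hpU : p.rep ∉ U) (hpos : 0 < φ.localDegreeIn ⊤ p) :
    ∃ h : Dual k (σ → k), h ≠ 0 ∧ U ≤ LinearMap.ker h ∧ p.rep ∈ LinearMap.ker h ∧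
      φ.degreeIn U < φ.degreeIn (LinearMap.ker h) := by
  obtain ⟨h, hne, hle⟩ := exists_ne_zero_le_ker (U := U ⊔ k ∙ p.rep) <| by
    have := finrank_sup_span_singleton_le U p.rep
    rw [finrank_fintype_fun_eq_card]
    omega
  have hUh : U ≤ LinearMap.ker h := le_sup_left.trans hle
  have hph : p.rep ∈ LinearMap.ker h :=
    hle (Submodule.mem_sup_right (Submodule.mem_span_singleton_self _))
  have hzero : ¬ 0 < φ.localDegreeIn U p := fun h => hpU (φ.localDegreeIn_pos_iff.1 h).1
  exact ⟨h, hne, hUh, hph, φ.degreeIn_lt_of_localDegreeIn_lt hUh hp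
    ((not_lt.1 hzero).trans_lt (φ.localDegreeIn_pos_iff.2 ⟨hph, hpos⟩))⟩

theorem Annihilates.three_mul_add_two_le_degree (hσ : 4 ≤ Fintype.card σ)
    (hφ : φ.Annihilates (e + 1)) (hres : ∀ h : Dual k (σ → k), h ≠ 0 → 0 < (φ.residual h).degree)
    (hline : ∀ L : Submodule k (σ → k), finrank k L ≤ 2 → 2 * (φ.pointsIn L).card ≤ e + 2) :
    3 * (e + 1) + 2 ≤ φ.degree := by
  by_contra! hdeg
  have hpos : 0 < φ.degree := by
    obtain ⟨h, hne, -⟩ := exists_ne_zero_le_ker (U := (⊥ : Submodule k (σ → k))) <| by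
      rw [finrank_bot, finrank_fintype_fun_eq_card]; omega
    exact (hres h hne).trans_le (φ.degreeIn_residual_le h ⊤)
  have hmin := hφ.add_two_le_degree hpos
  have line_off (h : Dual k (σ → k)) (hne : h ≠ 0)
      (hh : e + 3 ≤ φ.degreeIn (LinearMap.ker h)) :=
    hφ.exists_line_of_degree_residual_le hline (hres h hne) <| by
      have := φ.degree_residual_add_degreeIn_ker h
      omega
  obtain ⟨f, hf, hf_deg⟩ := hφ.exists_ne_zero_add_two_le_degreeIn_ker hσ hpos (by omega)
  obtain ⟨L, hL, hL_deg, hL_points⟩ := line_off f hf hf_deg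
  obtain ⟨g, hg, hLg, hg_deg⟩ := φ.exists_ne_zero_le_ker_min_le_degreeIn (U := L) (by omega)
  obtain ⟨M, hM, hM_deg, hM_points⟩ := line_off g hg (by omega)
  have hLM : Disjoint (φ.pointsIn L) (φ.pointsIn M) := Finset.disjoint_left.2 fun p hpL hpM =>
    (hM_points p hpM).2 (hLg (mem_pointsIn.1 hpL).2)
  obtain ⟨p, hp⟩ : (φ.pointsIn L).Nonempty := Finset.card_pos.1 <| by
    have := φ.degreeIn_le_two_mul_card_pointsIn L
    omega
  have hp_support := (mem_pointsIn.1 hp).1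
  obtain ⟨h, hh, hMh, hph, hh_deg⟩ := exists_ne_zero_le_ker_rep_mem_ker hσ hM hp_support
    (fun hpM => Finset.disjoint_left.1 hLM hp (mem_pointsIn.2 ⟨hp_support, hpM⟩))
    ((hL_points p hp).1 ▸ two_pos |>.trans_le (φ.localDegreeIn_mono le_top))
  obtain ⟨N, -, hN_deg, hN_points⟩ := line_off h hh (by omega)
  have hMN : Disjoint (φ.pointsIn M) (φ.pointsIn N) := Finset.disjoint_left.2 fun q hqM hqN =>
    (hN_points q hqN).2 (hMh (mem_pointsIn.1 hqM).2)
  have hLN : Disjoint (φ.pointsIn L) (φ.pointsIn N) := Finset.disjoint_left.2 fun q hqL hqN =>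
    have hLN := le_of_localDegreeIn_eq_two hL (hL_points q hqL).1 (hN_points q hqN).1
    (hN_points p (mem_pointsIn.2 ⟨hp_support, hLN (mem_pointsIn.1 hp).2⟩)).2 hph
  have hthree := degreeIn_add_add_le_degree hLM hLN hMN
  omega

end PointsIn

end FirstOrderFunctional

/-! ### Cohomological interpretation of linear relations between differentials -/

lemma finrank_homogeneousSubmodule (k : Type*) [Field k] (n d : ℕ) :
    finrank k (homogeneousSubmodule (Fin (n + 1)) k d) = (n + d).choose n := by
  classical
  have hsupp : homogeneousSubmodule (Fin (n + 1)) k d =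
      restrictSupport k (Finset.univ.finsuppAntidiag d : Finset (Fin (n + 1) →₀ ℕ)) := by
    rw [homogeneousSubmodule_eq_finsupp_supported, restrictSupport]
    congr 1
    ext s
    simp [Finset.mem_finsuppAntidiag, Finsupp.degree_eq_sum]
  rw [hsupp, finrank_eq_card_basis (basisRestrictSupport k _)]
  simp only [Finset.coe_sort_coe, Fintype.card_coe]
  rw [Finset.card_finsuppAntidiag_nat_eq_choose, Finset.card_univ, Fintype.card_fin,
    Nat.add_right_comm, Nat.add_sub_cancel, Nat.choose_symm_add]

instance finiteDimensional_homogeneousSubmodule {k σ : Type*} [Field k] [Finite σ] (d : ℕ) :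
    FiniteDimensional k (homogeneousSubmodule σ k d) :=
  Module.Finite.iff_fg.mpr (homogeneousSubmodule_fg σ k d)

section TerraciniMap

variable {k σ τ ι : Type*} [Field k] [Fintype σ] [Fintype τ] [Fintype ι] {d : ℕ}

/-- The map sending tangent vectors `cᵢ` at the points `Pᵢ` to the functional
`f ↦ ∑ i, (∂f/∂cᵢ)(Pᵢ)` on forms of degree `d`. Its range is the sum of the tangent spaces to the
`d`-th Veronese cone at the images of the `Pᵢ`. -/
noncomputable def terraciniMap (P : ι → σ → k) (d : ℕ) :
    (ι → σ → k) →ₗ[k] Dual k (homogeneousSubmodule σ k d) :=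
  ∑ i, ((differentialAt (P i)).domRestrict _).flip ∘ₗ LinearMap.proj i

lemma terraciniMap_apply (P : ι → σ → k) (c : ι → σ → k) (f : homogeneousSubmodule σ k d) :
    terraciniMap P d c f = ∑ i, differentialAt (P i) (f : MvPolynomial σ k) (c i) := by
  simp [terraciniMap, LinearMap.sum_apply]

lemma mem_dualCoannihilator_range_terraciniMap (P : ι → σ → k)
    (f : homogeneousSubmodule σ k d) :
    f ∈ (LinearMap.range (terraciniMap P d)).dualCoannihilator ↔
      ∀ i, differentialAt (P i) (f : MvPolynomial σ k) = 0 := by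
  classical
  simp only [Submodule.mem_dualCoannihilator, LinearMap.mem_range, forall_exists_index,
    forall_apply_eq_imp_iff, terraciniMap_apply]
  refine ⟨fun hf i => LinearMap.ext fun v => ?_, fun hf c => by simp [hf]⟩
  simpa [Pi.single_apply, apply_ite] using hf (Pi.single i v)

lemma injective_terraciniMap_of_comp (u : (τ → k) →ₗ[k] (σ → k)) (hu : Function.Injective u)
    (y : ι → τ → k) (hinj : Function.Injective (terraciniMap (fun i => u (y i)) d)) :
    Function.Injective (terraciniMap y d) := by
  refine (injective_iff_map_eq_zero _).2 fun c hc => ?_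
  have hpush : terraciniMap (fun i => u (y i)) d (fun i => u (c i)) = 0 := by
    ext f
    have hf := DFunLike.congr_fun hc ⟨_, isHomogeneous_linearPullback u f.2⟩
    simpa [terraciniMap_apply, differentialAt_linearPullback] using hf
  have hzero := (injective_iff_map_eq_zero _).1 hinj _ hpush
  exact funext fun i => (injective_iff_map_eq_zero u).1 hu _ (congrFun hzero i)

lemma mul_card_le_choose_of_injective_terraciniMap {r : ℕ} {y : ι → Fin (r + 1) → k}
    (hinj : Function.Injective (terraciniMap y d)) :
    (r + 1) * Fintype.card ι ≤ (r + d).choose r := by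
  have hle := LinearMap.finrank_le_finrank_of_injective hinj
  rwa [Subspace.dual_finrank_eq, finrank_homogeneousSubmodule, finrank_pi_fintype,
    Finset.sum_const, finrank_fin_fun, smul_eq_mul, Finset.card_univ, mul_comm] at hle

end TerraciniMap

section Cohomology

variable {k : Type*} [Field k] {n d : ℕ}

lemma mem_doubleVanishing_iff (hd : (d : k) ≠ 0) {m : ℕ} {f : MvPolynomial (Fin m) k}
    (hf : f.IsHomogeneous d) (x : Fin m → k) :
    f ∈ doubleVanishing k x ↔ differentialAt x f = 0 := by
  simp only [doubleVanishing, evalLM, Submodule.mem_inf, Submodule.mem_iInf, LinearMap.mem_ker,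
    LinearMap.comp_apply, AlgHom.toLinearMap_apply, Derivation.coeFn_coe,
    aeval_eq_eval]
  refine ⟨fun ⟨_, hpartial⟩ => ?_, fun hdiff => ⟨?_, fun i => ?_⟩⟩
  · ext v
    simpa [differentialAt_apply] using Finset.sum_eq_zero fun i _ => by simp [hpartial i]
  · simpa [hdiff, hd] using differentialAt_self hf x
  · rw [← differentialAt_basisFun, hdiff, LinearMap.zero_apply]

lemma h0_eq_finrank_dualCoannihilator (hd : (d : k) ≠ 0) (S : Finset (ProjSpace k n)) :
    h0 k n d S =
      finrank k (LinearMap.range (terraciniMap (fun p : S => p.1.rep) d)).dualCoannihilator := by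
  have hmap : homogeneousSubmodule (Fin (n + 1)) k d ⊓ ⨅ p ∈ S, doubleVanishing k p.rep =
      (LinearMap.range (terraciniMap (fun p : S => p.1.rep) d)).dualCoannihilator.map
        (homogeneousSubmodule (Fin (n + 1)) k d).subtype := by
    ext f
    simp only [Submodule.mem_inf, Submodule.mem_iInf, Submodule.mem_map, Submodule.subtype_apply,
      Subtype.exists, mem_dualCoannihilator_range_terraciniMap, exists_and_right, exists_eq_right,
      Subtype.forall, exists_prop]
    exact and_congr_right fun hf => forall₂_congr fun p _ => mem_doubleVanishing_iff hd hf p.rep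
  rw [h0, hmap, Submodule.finrank_map_subtype_eq]

lemma h1_eq_finrank_ker (hd : (d : k) ≠ 0) (S : Finset (ProjSpace k n)) :
    h1 k n d S = finrank k (LinearMap.ker (terraciniMap (fun p : S => p.1.rep) d)) := by
  have hrange := Subspace.finrank_add_finrank_dualCoannihilator_eq
    (LinearMap.range (terraciniMap (fun p : S => p.1.rep) d))
  have hker := LinearMap.finrank_range_add_finrank_ker (terraciniMap (fun p : S => p.1.rep) d)
  rw [finrank_homogeneousSubmodule, ← h0_eq_finrank_dualCoannihilator hd] at hrange
  rw [finrank_pi_fintype, Finset.sum_const, finrank_fin_fun, Finset.card_univ, Fintype.card_coe,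
    smul_eq_mul, mul_comm] at hker
  zify at hrange hker
  rw [h1]
  linarith

lemma h1_eq_zero_iff_injective (hd : (d : k) ≠ 0) (S : Finset (ProjSpace k n)) :
    h1 k n d S = 0 ↔ Function.Injective (terraciniMap (fun p : S => p.1.rep) d) := by
  rw [h1_eq_finrank_ker hd, Nat.cast_eq_zero, Submodule.finrank_eq_zero, LinearMap.ker_eq_bot]

lemma h1_eq_zero_iff (hd : (d : k) ≠ 0) (S : Finset (ProjSpace k n)) :
    h1 k n d S = 0 ↔ ∀ c : ProjSpace k n → Fin (n + 1) → k,
      (∀ f, f.IsHomogeneous d → ∑ p ∈ S, differentialAt p.rep f (c p) = 0) →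
        ∀ p ∈ S, c p = 0 := by
  rw [h1_eq_zero_iff_injective hd, injective_iff_map_eq_zero]
  constructor
  · intro hinj c hc p hp
    refine congrFun (hinj (fun q => c q) (LinearMap.ext fun f => ?_)) ⟨p, hp⟩
    rw [terraciniMap_apply, LinearMap.zero_apply, ← hc f f.2]
    exact S.sum_coe_sort fun q => differentialAt q.rep (f : MvPolynomial (Fin (n + 1)) k) (c q)
  · intro hindep c hc
    let c' : ProjSpace k n → Fin (n + 1) → k := Function.extend Subtype.val c 0
    have hc' (q : S) : c' q = c q := Subtype.val_injective.extend_apply _ _ _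
    have hzero := hindep c' fun f hf => by
      rw [← S.sum_coe_sort]
      simpa [terraciniMap_apply, hc'] using DFunLike.congr_fun hc ⟨f, hf⟩
    exact funext fun q => (hc' q).symm.trans (hzero q q.2)

lemma mul_card_le_choose_of_h1_eq_zero (hd : (d : k) ≠ 0) {r : ℕ}
    {L : Submodule k (Fin (n + 1) → k)} (hL : finrank k L = r + 1) {A : Finset (ProjSpace k n)}
    (hAL : ∀ p ∈ A, p.rep ∈ L) (hA : h1 k n d A = 0) :
    (r + 1) * A.card ≤ (r + d).choose r := by
  let coords : L ≃ₗ[k] (Fin (r + 1) → k) := (finBasisOfFinrankEq k L hL).equivFun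
  let u : (Fin (r + 1) → k) →ₗ[k] (Fin (n + 1) → k) := L.subtype ∘ₗ coords.symm.toLinearMap
  let y (p : A) : Fin (r + 1) → k := coords ⟨p.1.rep, hAL p p.2⟩
  have hy (p : A) : u (y p) = p.1.rep := by simp [u, y]
  have hinj := (h1_eq_zero_iff_injective hd A).1 hA
  simp only [← hy] at hinj
  simpa using mul_card_le_choose_of_injective_terraciniMap
    (injective_terraciniMap_of_comp u (L.subtype_injective.comp coords.symm.injective) y hinj)

lemma two_mul_card_le_of_h1_eq_zero (hd : (d : k) ≠ 0) (hn : 1 ≤ n)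
    {L : Submodule k (Fin (n + 1) → k)} (hL : finrank k L ≤ 2) {A : Finset (ProjSpace k n)}
    (hAL : ∀ p ∈ A, p.rep ∈ L) (hA : h1 k n d A = 0) : 2 * A.card ≤ d + 1 := by
  obtain ⟨L', hLL', hL'⟩ := exists_ge_finrank_eq L hL (by rw [finrank_fin_fun]; omega)
  simpa [add_comm] using mul_card_le_choose_of_h1_eq_zero hd hL' (fun p hp => hLL' (hAL p hp)) hA

end Cohomology

/-! ### Functionals attached to minimally Terracini sets -/

section MinTerracini

variable {k : Type*} [Field k] {n d x : ℕ}

lemma exists_coeff_tangent_of_differentialAt {σ : Type*} [Fintype σ] (hd : (d : k) ≠ 0)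
    (p : ℙ k (σ → k)) (w : σ → k) :
    ∃ (a : k) (v : σ → k), (v ≠ 0 → v ∉ p.submodule) ∧ (w ≠ 0 → v ≠ 0 ∨ a ≠ 0) ∧
      ∀ f : MvPolynomial σ k, f.IsHomogeneous d →
        a * eval p.rep f + differentialAt p.rep f v = differentialAt p.rep f w := by
  by_cases hw : w ∈ p.submodule
  · rw [p.submodule_eq, Submodule.mem_span_singleton] at hw
    obtain ⟨t, rfl⟩ := hw
    refine ⟨t * d, 0, fun hne => (hne rfl).elim,
      fun hne => .inr (mul_ne_zero (smul_ne_zero_iff.1 hne).1 hd), fun f hf => ?_⟩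
    rw [map_zero, add_zero, map_smul, differentialAt_self hf, smul_eq_mul, mul_assoc]
  · exact ⟨0, w, fun _ => hw, .inl, fun f _ => by rw [zero_mul, zero_add]⟩

namespace FirstOrderFunctional

lemma exists_annihilates_of_relation {σ : Type*} [Fintype σ] (hd : (d : k) ≠ 0)
    {S : Finset (ℙ k (σ → k))} {c : ℙ k (σ → k) → σ → k}
    (hc : ∀ f : MvPolynomial σ k, f.IsHomogeneous d →
      ∑ p ∈ S, differentialAt p.rep f (c p) = 0) :
    ∃ φ : FirstOrderFunctional k σ, φ.support = S ∧ φ.Annihilates d ∧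
      ∀ p, c p ≠ 0 → 0 < φ.localDegreeIn ⊤ p := by
  choose a v hv hne heq using fun p => exists_coeff_tangent_of_differentialAt hd p (c p)
  refine ⟨⟨S, a, v, hv⟩, rfl, fun f hf => ?_, fun p hp => ?_⟩
  · exact (Finset.sum_congr rfl fun p _ => heq p f hf).trans (hc f hf)
  · exact (localDegreeIn_top_pos_iff _).2 (hne p hp)

lemma degree_residual_pos_of_spans {φ : FirstOrderFunctional k (Fin (n + 1))}
    (hspan : Spans k n φ.support) (hpos : ∀ p ∈ φ.support, 0 < φ.localDegreeIn ⊤ p)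
    {h : Dual k (Fin (n + 1) → k)} (hne : h ≠ 0) : 0 < (φ.residual h).degree := by
  obtain ⟨p, hp, hph⟩ : ∃ p ∈ φ.support, p.rep ∉ LinearMap.ker h := by
    by_contra! hall
    have htop : ⊤ ≤ LinearMap.ker h :=
      hspan.symm.trans_le (Submodule.span_le.2 (Set.image_subset_iff.2 hall))
    exact hne (LinearMap.ker_eq_top.1 (top_le_iff.1 htop))
  have hlt : φ.degreeIn (LinearMap.ker h) < φ.degree :=
    φ.degreeIn_lt_of_localDegreeIn_lt le_top hp
      (φ.localDegreeIn_lt_top_iff.2 ⟨hpos p hp, .inl hph⟩)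
  have := φ.degree_residual_add_degreeIn_ker h
  omega

lemma pointsIn_ssubset_support_of_spans {φ : FirstOrderFunctional k (Fin (n + 1))}
    (hspan : Spans k n φ.support) {L : Submodule k (Fin (n + 1) → k)} (hL : finrank k L < n + 1) :
    φ.pointsIn L ⊂ φ.support := by
  refine ⟨fun p hp => (mem_pointsIn.1 hp).1, fun hsub => ?_⟩
  have htop : ⊤ ≤ L := hspan.symm.trans_le
    (Submodule.span_le.2 (Set.image_subset_iff.2 fun p hp => (mem_pointsIn.1 (hsub hp)).2))
  rw [top_le_iff.1 htop, finrank_top, finrank_fin_fun] at hL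
  exact hL.false

end FirstOrderFunctional

lemma exists_relation_of_mem_minTerracini (hd : (d : k) ≠ 0) {S : Finset (ProjSpace k n)}
    (hS : S ∈ minTerracini k n d x) :
    ∃ c : ProjSpace k n → Fin (n + 1) → k,
      (∀ f, f.IsHomogeneous d → ∑ p ∈ S, differentialAt p.rep f (c p) = 0) ∧
        ∀ p ∈ S, c p ≠ 0 := by
  classical
  obtain ⟨⟨-, -, -, hh1⟩, hmin⟩ := hS
  have hdep := mt (h1_eq_zero_iff hd S).2 hh1.ne'
  push Not at hdep
  obtain ⟨c, hc, p, hp, hcp⟩ := hdep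
  refine ⟨c, hc, fun q hq hcq => hcp ?_⟩
  have hindep := (h1_eq_zero_iff hd _).1 (hmin _ (Finset.erase_ssubset hq)) c fun f hf => by
    rw [Finset.sum_erase _ (by rw [hcq, map_zero]), hc f hf]
  exact hindep p (Finset.mem_erase.2 ⟨fun hpq => hcp (hpq ▸ hcq), hp⟩)

theorem minTerracini_P3_empty_small_x_general (hn : 3 ≤ n) (hd : (d : k) ≠ 0)
    (hx : 2 * x ≤ 3 * d + 1) : minTerracini k n d x = ∅ := by
  refine Set.eq_empty_of_forall_notMem fun S hS => ?_
  obtain ⟨c, hc, hc_ne⟩ := exists_relation_of_mem_minTerracini hd hS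
  obtain ⟨φ, rfl, hφ, hpos⟩ := FirstOrderFunctional.exists_annihilates_of_relation hd hc
  obtain ⟨⟨hcard, hspan, -, -⟩, hmin⟩ := hS
  obtain ⟨e, rfl⟩ : ∃ e, d = e + 1 := Nat.exists_eq_add_one.2 (Nat.pos_of_ne_zero fun h => by
    simp [h] at hd)
  have hline (L : Submodule k (Fin (n + 1) → k)) (hL : finrank k L ≤ 2) :
      2 * (φ.pointsIn L).card ≤ e + 2 :=
    two_mul_card_le_of_h1_eq_zero hd (by omega) hL
      (fun p hp => (FirstOrderFunctional.mem_pointsIn.1 hp).2)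
      (hmin _ (φ.pointsIn_ssubset_support_of_spans hspan (by omega)))
  have hdegree_ge : 3 * (e + 1) + 2 ≤ φ.degree :=
    hφ.three_mul_add_two_le_degree (by rw [Fintype.card_fin]; omega)
      (fun h hne => φ.degree_residual_pos_of_spans hspan (fun p hp => hpos p (hc_ne p hp)) hne)
      hline
  have hdegree_le : φ.degree ≤ φ.support.card * 2 :=
    Finset.sum_le_card_nsmul _ _ _ fun _ _ => φ.localDegreeIn_le_two
  omega

end MinTerracini

/-- Theorem: for `d ≥ 4` and `2x ≤ 3d + 1`, `T(3,d;x)' = ∅`. -/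
theorem minTerracini_P3_empty_small_x
    (k : Type*) [Field k] [IsAlgClosed k] [CharZero k]
    (d x : ℕ) (hd : 4 ≤ d) (hx : 2 * x ≤ 3 * d + 1) :
    minTerracini k 3 d x = ∅ :=
  minTerracini_P3_empty_small_x_general le_rfl (Nat.cast_ne_zero.2 (by omega)) hx
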